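/- For n > 1 and d ≥ 3, the maximum contact number c(n,d) of a packing of n unit balls in ℝ^d satisfies c(n,d) < (1/2)·k(d)·n − (1/2^d)·δ_d^(−(d−1)/d)·n^((d−1)/d), where k(d) is the kissing number and δ_d the sphere packing density in ℝ^d. -/

import Mathlib

open scoped Classical ENNReal
open MeasureTheory

noncomputable section

/-- Twice the contact number: the number of ordered pairs of distinct centers in `P`
at distance exactly `2`. -/
def contactsOrdered {d : ℕ} (P : Finset (EuclideanSpace ℝ (Fin d))) : ℕ :=
  (P.offDiag.filter fun p => dist p.1 p.2 = 2).card

/-- The kissing number `k(d)`: the largest number of non-overlapping unit balls that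
can touch a fixed unit ball in `ℝ^d`. -/
def kissingNumber (d : ℕ) : ℕ :=
  sSup {m : ℕ | ∃ c : Fin m → EuclideanSpace ℝ (Fin d),
    (∀ i, dist (c i) 0 = 2) ∧ ∀ i j, i ≠ j → 2 ≤ dist (c i) (c j)}

/-- The sphere packing density `δ_d`: the supremum over all unit ball packings of
`ℝ^d` of the upper density of the packing. -/
def spherePackingDensity (d : ℕ) : ℝ :=
  sSup {x : ℝ | ∃ C : Set (EuclideanSpace ℝ (Fin d)),
    (∀ p ∈ C, ∀ q ∈ C, p ≠ q → 2 ≤ dist p q) ∧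
    x = Filter.limsup
      (fun R : ℝ =>
        (volume ((⋃ c ∈ C, Metric.closedBall c 1) ∩
            Metric.ball (0 : EuclideanSpace ℝ (Fin d)) R)).toReal /
          (volume (Metric.ball (0 : EuclideanSpace ℝ (Fin d)) R)).toReal)
      Filter.atTop}

/-!
Call a centre of the packing `P` unsaturated if it touches fewer than `k(d)` others. A point `x` at
distance at least `2` from all of `P` has only unsaturated nearest centres `p`: otherwise the
contacts of `p` form a maximum kissing configuration, so the direction from `p` to `x` is within
`π / 3` of some contact, and that contact is closer to `x` than `p`. Hence the `2`-neighbourhood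
`U` of `P` expands only near the `m` unsaturated centres, while Brunn–Minkowski makes it expand at
least as fast as a ball of the same volume and radius `ρ`; comparing first-order growth gives
`ρ ^ (d - 1) ≤ m * 2 ^ (d - 1)`. The volume of `U` is at least `n / δ_d` times that of a unit ball:
in a lattice-periodic packing with the most centres per cell, the centres conflicting with any
translate of `P` are at least `n` in number, and averaging over translates compares the density of
this packing with the share of `U` per centre of `P`. Finally, an extreme centre of `P` has all its
contacts in a half-space and so misses at least two of the `k(d)`, which makes the bound strict.
-/

open Filter Metric Set Topology
open scoped Pointwise

section PrekopaLeindler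

theorem volume_add_volume_le_volume_add_of_isCompact {K L : Set ℝ} (hK : IsCompact K)
    (hL : IsCompact L) (hK₀ : K.Nonempty) (hL₀ : L.Nonempty) :
    volume K + volume L ≤ volume (K + L) := by
  obtain ⟨a, haK, ha⟩ := hK.exists_isGreatest hK₀
  obtain ⟨b, hbL, hb⟩ := hL.exists_isLeast hL₀
  have hdisj : AEDisjoint volume (b +ᵥ K) (a +ᵥ L) := by
    refine measure_mono_null (t := {a + b}) ?_ Real.volume_singleton
    rintro _ ⟨⟨x, hx, rfl⟩, y, hy, hxy⟩
    simp only [vadd_eq_add, mem_singleton_iff] at hxy ⊢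
    linarith [ha hx, hb hy]
  calc volume K + volume L
      = volume ((b +ᵥ K) ∪ (a +ᵥ L)) := by
        rw [measure_union₀ (hL.measurableSet.const_vadd a).nullMeasurableSet hdisj,
          measure_vadd, measure_vadd]
    _ ≤ volume (K + L) := by
        refine measure_mono (union_subset ?_ (vadd_set_subset_add haK))
        rw [add_comm K]
        exact vadd_set_subset_add hbL

theorem volume_add_volume_le_volume_add {A B : Set ℝ} (hA : MeasurableSet A)
    (hB : MeasurableSet B) (hA₀ : A.Nonempty) (hB₀ : B.Nonempty) :
    volume A + volume B ≤ volume (A + B) := by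
  obtain ⟨a, ha⟩ := hA₀
  obtain ⟨b, hb⟩ := hB₀
  simp_rw [hA.measure_eq_iSup_isCompact, hB.measure_eq_iSup_isCompact, iSup_and']
  refine ENNReal.biSup_add_biSup_le' ⟨∅, empty_subset A, isCompact_empty⟩
    ⟨∅, empty_subset B, isCompact_empty⟩ fun K hK L hL => ?_
  calc volume K + volume L
      ≤ volume (insert a K) + volume (insert b L) := by gcongr <;> exact subset_insert _ _
    _ ≤ volume (insert a K + insert b L) :=
        volume_add_volume_le_volume_add_of_isCompact (hK.2.insert a) (hL.2.insert b)
          (insert_nonempty a K) (insert_nonempty b L)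
    _ ≤ volume (A + B) :=
        measure_mono (add_subset_add (insert_subset ha hK.1) (insert_subset hb hL.1))

theorem lintegral_min_one {α : Type*} [MeasurableSpace α] {μ : Measure α} {f : α → ℝ≥0∞}
    (hf : Measurable f) :
    ∫⁻ x, min (f x) 1 ∂μ = ∫⁻ t in Ioo (0 : ℝ) 1, μ {x | ENNReal.ofReal t < f x} := by
  have hfin (x : α) : min (f x) 1 ≠ ∞ := ne_top_of_le_ne_top ENNReal.one_ne_top (min_le_right _ _)
  calc ∫⁻ x, min (f x) 1 ∂μ
      = ∫⁻ x, ENNReal.ofReal (min (f x) 1).toReal ∂μ := by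
        simp only [ENNReal.ofReal_toReal (hfin _)]
    _ = ∫⁻ t in Ioi (0 : ℝ), μ {x | t < (min (f x) 1).toReal} :=
        lintegral_eq_lintegral_meas_lt μ (ae_of_all _ fun _ => ENNReal.toReal_nonneg)
          (by fun_prop)
    _ = ∫⁻ t in Ioi (0 : ℝ), (Iio 1).indicator (fun t => μ {x | ENNReal.ofReal t < f x}) t := by
        refine setLIntegral_congr_fun measurableSet_Ioi fun t ht => ?_
        simp only [← ENNReal.ofReal_lt_iff_lt_toReal (mem_Ioi.1 ht).le (hfin _), lt_min_iff,
          ENNReal.ofReal_lt_one]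
        by_cases h : t < 1 <;> simp [h]
    _ = ∫⁻ t in Ioo (0 : ℝ) 1, μ {x | ENNReal.ofReal t < f x} := by
        rw [setLIntegral_indicator measurableSet_Iio, inter_comm, Ioi_inter_Iio]

theorem rpow_mul_rpow_le_add {a b : ℝ} (ha : 0 < a) (hb : 0 < b) (hab : a + b = 1)
    (x y : ℝ≥0∞) : x ^ a * y ^ b ≤ ENNReal.ofReal a * x + ENNReal.ofReal b * y := by
  have h := ENNReal.young_inequality (x ^ a) (y ^ b) (Real.HolderConjugate.inv_inv ha hb hab)
  simpa only [ENNReal.rpow_rpow_inv ha.ne', ENNReal.rpow_rpow_inv hb.ne',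
    ENNReal.ofReal_inv_of_pos ha, ENNReal.ofReal_inv_of_pos hb, div_eq_mul_inv, inv_inv,
    mul_comm x, mul_comm y] using h

theorem lintegral_min_one_add_le {a b : ℝ} (ha : 0 < a) (hb : 0 < b) {f g h : ℝ → ℝ≥0∞}
    (hf : Measurable f) (hg : Measurable g) (hh : Measurable h) (hf₁ : 1 ≤ ⨆ x, f x)
    (hg₁ : 1 ≤ ⨆ x, g x) (hfgh : ∀ x y, min (f x) (g y) ≤ h (a * x + b * y)) :
    ENNReal.ofReal a * (∫⁻ x, min (f x) 1) + ENNReal.ofReal b * (∫⁻ x, min (g x) 1) ≤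
      ∫⁻ x, min (h x) 1 := by
  rw [lintegral_min_one hf, lintegral_min_one hg, lintegral_min_one hh,
    ← lintegral_const_mul' _ _ ENNReal.ofReal_ne_top,
    ← lintegral_const_mul' _ _ ENNReal.ofReal_ne_top]
  refine (le_lintegral_add _ _).trans (setLIntegral_mono' measurableSet_Ioo fun t ht => ?_)
  have hne {k : ℝ → ℝ≥0∞} (hk : 1 ≤ ⨆ x, k x) : {x | ENNReal.ofReal t < k x}.Nonempty :=
    lt_iSup_iff.1 ((ENNReal.ofReal_lt_one.2 ht.2).trans_le hk)
  have hsub : a • {x | ENNReal.ofReal t < f x} + b • {x | ENNReal.ofReal t < g x} ⊆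
      {x | ENNReal.ofReal t < h x} := by
    rintro _ ⟨_, ⟨x, hx, rfl⟩, _, ⟨y, hy, rfl⟩, rfl⟩
    exact (lt_min hx hy).trans_le (hfgh x y)
  calc ENNReal.ofReal a * volume {x | ENNReal.ofReal t < f x} +
        ENNReal.ofReal b * volume {x | ENNReal.ofReal t < g x}
      = volume (a • {x | ENNReal.ofReal t < f x}) + volume (b • {x | ENNReal.ofReal t < g x}) := by
        simp only [Measure.addHaar_smul_of_nonneg volume ha.le,
          Measure.addHaar_smul_of_nonneg volume hb.le, Module.finrank_self, pow_one]
    _ ≤ volume (a • {x | ENNReal.ofReal t < f x} + b • {x | ENNReal.ofReal t < g x}) :=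
        volume_add_volume_le_volume_add ((measurableSet_lt measurable_const hf).const_smul₀ a)
          ((measurableSet_lt measurable_const hg).const_smul₀ b)
          (hne hf₁).smul_set (hne hg₁).smul_set
    _ ≤ volume {x | ENNReal.ofReal t < h x} := measure_mono hsub

/-- The Prékopa–Leindler inequality holds for `μ`: a functional form of the multiplicative
Brunn–Minkowski inequality which, unlike the latter, is inherited by product measures. Functions
take values in `ℝ≥0∞`, so no integrability is assumed. -/
def PrekopaLeindler {E : Type*} [AddCommGroup E] [Module ℝ E] [MeasurableSpace E]
    (μ : Measure E) : Prop :=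
  ∀ ⦃a b : ℝ⦄, 0 < a → 0 < b → a + b = 1 → ∀ ⦃f g h : E → ℝ≥0∞⦄, Measurable f → Measurable g →
    Measurable h → (∀ x y, f x ^ a * g y ^ b ≤ h (a • x + b • y)) →
    (∫⁻ x, f x ∂μ) ^ a * (∫⁻ x, g x ∂μ) ^ b ≤ ∫⁻ x, h x ∂μ

theorem lintegral_min_eq_mul {α : Type*} [MeasurableSpace α] {μ : Measure α} (f : α → ℝ≥0∞)
    {s : ℝ≥0∞} (hs₀ : s ≠ 0) (hs : s ≠ ∞) :
    ∫⁻ x, min (f x) s ∂μ = s * ∫⁻ x, min (f x / s) 1 ∂μ := by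
  rw [← lintegral_const_mul' _ _ hs]
  refine lintegral_congr fun x => ?_
  rw [mul_min, ENNReal.mul_div_cancel hs₀ hs, mul_one]

theorem min_le_rpow_mul_rpow {a b : ℝ} (ha : 0 < a) (hb : 0 < b) (hab : a + b = 1)
    (x y : ℝ≥0∞) : min x y ≤ x ^ a * y ^ b :=
  calc min x y = min x y ^ a * min x y ^ b := by
        rw [← ENNReal.rpow_add_of_nonneg a b ha.le hb.le, hab, ENNReal.rpow_one]
    _ ≤ x ^ a * y ^ b := by
        gcongr
        · exact min_le_left x y
        · exact min_le_right x y

theorem lintegral_min_rpow_mul_le {a b : ℝ} (ha : 0 < a) (hb : 0 < b) (hab : a + b = 1)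
    {f g h : ℝ → ℝ≥0∞} (hf : Measurable f) (hg : Measurable g) (hh : Measurable h)
    (hfgh : ∀ x y, f x ^ a * g y ^ b ≤ h (a • x + b • y)) {s t : ℝ≥0∞} (hs₀ : s ≠ 0)
    (hs : s < ⨆ x, f x) (ht₀ : t ≠ 0) (ht : t < ⨆ x, g x) :
    (∫⁻ x, min (f x) s) ^ a * (∫⁻ x, min (g x) t) ^ b ≤ ∫⁻ x, h x := by
  set r := s ^ a * t ^ b with hr
  have hr₀ : r ≠ 0 := by simp [hr, hs₀, ht₀, hs.ne_top, ht.ne_top]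
  have hr_top : r ≠ ∞ := ENNReal.mul_ne_top (ENNReal.rpow_ne_top_of_nonneg ha.le hs.ne_top)
    (ENNReal.rpow_ne_top_of_nonneg hb.le ht.ne_top)
  have hnorm {k : ℝ → ℝ≥0∞} {u : ℝ≥0∞} (hu₀ : u ≠ 0) (hu : u < ⨆ x, k x) :
      1 ≤ ⨆ x, k x / u := by
    rw [← ENNReal.iSup_div, ENNReal.le_div_iff_mul_le (.inl hu₀) (.inl hu.ne_top), one_mul]
    exact hu.le
  have hscaled (x y : ℝ) : min (f x / s) (g y / t) ≤ h (a * x + b * y) / r :=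
    calc min (f x / s) (g y / t)
        ≤ (f x / s) ^ a * (g y / t) ^ b := min_le_rpow_mul_rpow ha hb hab _ _
      _ = f x ^ a * g y ^ b / r := by
        rw [ENNReal.div_rpow_of_nonneg _ _ ha.le, ENNReal.div_rpow_of_nonneg _ _ hb.le, hr,
          ENNReal.mul_div_mul_comm (.inr (ENNReal.rpow_ne_top_of_nonneg hb.le ht.ne_top))
          (.inl (ENNReal.rpow_ne_top_of_nonneg ha.le hs.ne_top))]
      _ ≤ h (a * x + b * y) / r := by gcongr; exact hfgh x y
  calc (∫⁻ x, min (f x) s) ^ a * (∫⁻ x, min (g x) t) ^ b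
      = r * ((∫⁻ x, min (f x / s) 1) ^ a * (∫⁻ x, min (g x / t) 1) ^ b) := by
        rw [lintegral_min_eq_mul f hs₀ hs.ne_top, lintegral_min_eq_mul g ht₀ ht.ne_top,
          ENNReal.mul_rpow_of_nonneg _ _ ha.le, ENNReal.mul_rpow_of_nonneg _ _ hb.le,
          mul_mul_mul_comm]
    _ ≤ r * ∫⁻ x, min (h x / r) 1 := by
        gcongr
        exact (rpow_mul_rpow_le_add ha hb hab _ _).trans
          (lintegral_min_one_add_le ha hb (hf.div_const s) (hg.div_const t) (hh.div_const r)
            (hnorm hs₀ hs) (hnorm ht₀ ht) hscaled)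
    _ = ∫⁻ x, min (h x) r := (lintegral_min_eq_mul h hr₀ hr_top).symm
    _ ≤ ∫⁻ x, h x := lintegral_mono fun x => min_le_left _ _

theorem exists_tendsto_lintegral_min {α : Type*} [MeasurableSpace α] {μ : Measure α}
    {f : α → ℝ≥0∞} (hf : Measurable f) (hf₀ : ∫⁻ x, f x ∂μ ≠ 0) :
    ∃ u : ℕ → ℝ≥0∞, (∀ n, u n ≠ 0 ∧ u n < ⨆ x, f x) ∧
      Tendsto (fun n => ∫⁻ x, min (f x) (u n) ∂μ) atTop (𝓝 (∫⁻ x, f x ∂μ)) := by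
  have hsup : 0 < ⨆ x, f x := by
    refine pos_iff_ne_zero.2 fun h => hf₀ ?_
    simp [ENNReal.iSup_eq_zero.1 h]
  obtain ⟨u, hu, hu_mem, hu_lim⟩ := exists_seq_strictMono_tendsto' hsup
  refine ⟨u, fun n => ⟨(hu_mem n).1.ne', (hu_mem n).2⟩, ?_⟩
  refine lintegral_tendsto_of_tendsto_of_monotone (fun n => by fun_prop)
    (ae_of_all μ fun x i j hij => min_le_min_left _ (hu.monotone hij)) (ae_of_all μ fun x => ?_)
  simpa only [min_eq_left (le_iSup f x)] using (tendsto_const_nhds (x := f x)).min hu_lim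

theorem prekopaLeindler_real : PrekopaLeindler (volume : Measure ℝ) := by
  intro a b ha hb hab f g h hf hg hh hfgh
  by_cases hf₀ : ∫⁻ x, f x = 0
  · simp [hf₀, ha]
  by_cases hg₀ : ∫⁻ x, g x = 0
  · simp [hg₀, hb]
  obtain ⟨u, hu, hu_lim⟩ := exists_tendsto_lintegral_min hf hf₀
  obtain ⟨v, hv, hv_lim⟩ := exists_tendsto_lintegral_min hg hg₀
  refine le_of_tendsto' (ENNReal.Tendsto.mul (hu_lim.ennrpow_const a) (.inl ?_)
    (hv_lim.ennrpow_const b) (.inl ?_)) fun n =>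
      lintegral_min_rpow_mul_le ha hb hab hf hg hh hfgh (hu n).1 (hu n).2 (hv n).1 (hv n).2
  · simp [ENNReal.rpow_eq_zero_iff, hf₀, ha.not_gt]
  · simp [ENNReal.rpow_eq_zero_iff, hg₀, hb.not_gt]

namespace PrekopaLeindler

variable {E F : Type*} [AddCommGroup E] [Module ℝ E] [MeasurableSpace E] [AddCommGroup F]
  [Module ℝ F] [MeasurableSpace F] {μ : Measure E} {ν : Measure F}

theorem prod [SFinite ν] (hμ : PrekopaLeindler μ) (hν : PrekopaLeindler ν) :
    PrekopaLeindler (μ.prod ν) := by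
  intro a b ha hb hab f g h hf hg hh hfgh
  rw [lintegral_prod _ hf.aemeasurable, lintegral_prod _ hg.aemeasurable,
    lintegral_prod _ hh.aemeasurable]
  refine hμ ha hb hab hf.lintegral_prod_right' hg.lintegral_prod_right'
    hh.lintegral_prod_right' fun s t => ?_
  exact hν ha hb hab (by fun_prop) (by fun_prop) (by fun_prop) fun x y => hfgh (s, x) (t, y)

theorem map (hμ : PrekopaLeindler μ) (e : E →ₗ[ℝ] F) (he : Measurable e) :
    PrekopaLeindler (μ.map e) := by
  intro a b ha hb hab f g h hf hg hh hfgh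
  rw [lintegral_map hf he, lintegral_map hg he, lintegral_map hh he]
  refine hμ ha hb hab (hf.comp he) (hg.comp he) (hh.comp he) fun x y => ?_
  simpa only [map_add, map_smul] using hfgh (e x) (e y)

theorem smul (hμ : PrekopaLeindler μ) (c : ℝ≥0∞) : PrekopaLeindler (c • μ) := by
  intro a b ha hb hab f g h hf hg hh hfgh
  simp only [lintegral_smul_measure, smul_eq_mul]
  rw [ENNReal.mul_rpow_of_nonneg _ _ ha.le, ENNReal.mul_rpow_of_nonneg _ _ hb.le,
    mul_mul_mul_comm, ← ENNReal.rpow_add_of_nonneg a b ha.le hb.le, hab, ENNReal.rpow_one]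
  gcongr
  exact hμ ha hb hab hf hg hh hfgh

end PrekopaLeindler

theorem prekopaLeindler_pi (n : ℕ) : PrekopaLeindler (volume : Measure (Fin n → ℝ)) := by
  induction n with
  | zero =>
    intro a b _ _ _ f g h _ _ _ hfgh
    simp only [lintegral_unique, volume_pi, Measure.pi_univ, Finset.univ_eq_empty,
      Finset.prod_empty, mul_one]
    convert hfgh default default
  | succ n ih =>
    have hmp := (volume_preserving_piFinSuccAbove (fun _ : Fin (n + 1) => ℝ) 0).symm
    have hcons : ⇑(MeasurableEquiv.piFinSuccAbove (fun _ : Fin (n + 1) => ℝ) 0).symm =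
        (Fin.consLinearEquiv ℝ fun _ : Fin (n + 1) => ℝ).toLinearMap := by
      ext p i
      refine Fin.cases ?_ (fun _ => ?_) i <;> rfl
    rw [← hmp.map_eq, hcons]
    exact (prekopaLeindler_real.prod ih).map _ (hcons ▸ hmp.measurable)

theorem prekopaLeindler_addHaar {E : Type*} [NormedAddCommGroup E] [NormedSpace ℝ E]
    [FiniteDimensional ℝ E] [MeasurableSpace E] [BorelSpace E] (μ : Measure E)
    [μ.IsAddHaarMeasure] : PrekopaLeindler μ := by
  let e : E ≃L[ℝ] (Fin (Module.finrank ℝ E) → ℝ) := .ofFinrankEq (by simp)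
  have : (volume.map e.symm).IsAddHaarMeasure := e.symm.isAddHaarMeasure_map volume
  rw [Measure.isAddLeftInvariant_eq_smul μ (volume.map e.symm)]
  exact ((prekopaLeindler_pi _).map e.symm.toLinearMap e.symm.continuous.measurable).smul _

theorem measure_rpow_mul_measure_rpow_le {E : Type*} [NormedAddCommGroup E] [NormedSpace ℝ E]
    [FiniteDimensional ℝ E] [MeasurableSpace E] [BorelSpace E] (μ : Measure E)
    [μ.IsAddHaarMeasure] {a b : ℝ} (ha : 0 < a) (hb : 0 < b) (hab : a + b = 1) {A B : Set E}
    (hA : MeasurableSet A) (hB : MeasurableSet B) :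
    μ A ^ a * μ B ^ b ≤ μ (a • A + b • B) := by
  have hC := measurableSet_toMeasurable μ (a • A + b • B)
  have h := prekopaLeindler_addHaar μ ha hb hab (measurable_one.indicator hA)
    (measurable_one.indicator hB) (measurable_one.indicator hC) fun x y => ?_
  · simpa only [lintegral_indicator_one, hA, hB, hC, measure_toMeasurable] using h
  by_cases hx : x ∈ A
  · by_cases hy : y ∈ B
    · have hxy : a • x + b • y ∈ toMeasurable μ (a • A + b • B) :=
        subset_toMeasurable _ _ (add_mem_add (smul_mem_smul_set hx) (smul_mem_smul_set hy))
      simp [hx, hy, hxy]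
    · simp [hy, hb]
  · simp [hx, ha]

-- The thickening is `a • (a⁻¹ • A) + b • ball 0 (ρ + ε)`, and both sets combined are at least as
-- large as `ball 0 (ρ + ε)`.
theorem measure_ball_add_le_measure_thickening {E : Type*} [NormedAddCommGroup E]
    [NormedSpace ℝ E] [FiniteDimensional ℝ E] [MeasurableSpace E] [BorelSpace E] (μ : Measure E)
    [μ.IsAddHaarMeasure] {A : Set E} (hA : MeasurableSet A) {ρ ε : ℝ} (hρ : 0 < ρ) (hε : 0 < ε)
    (hAρ : μ (ball 0 ρ) ≤ μ A) : μ (ball 0 (ρ + ε)) ≤ μ (thickening ε A) := by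
  have hσ : 0 < ρ + ε := by positivity
  set a := ρ / (ρ + ε) with ha
  set b := ε / (ρ + ε) with hb
  have hab : a + b = 1 := by rw [ha, hb, ← add_div, div_self hσ.ne']
  have ha₀ : 0 < a := by positivity
  have hb₀ : 0 < b := by positivity
  have hscale : μ (ball 0 (ρ + ε)) ≤ μ (a⁻¹ • A) :=
    calc μ (ball 0 (ρ + ε)) = μ (a⁻¹ • ball 0 ρ) := by
          rw [_root_.smul_ball (inv_ne_zero ha₀.ne'), smul_zero,
            Real.norm_of_nonneg (by positivity), ha, inv_div, div_mul_cancel₀ _ hρ.ne']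
      _ ≤ μ (a⁻¹ • A) := by
          simp only [Measure.addHaar_smul]
          gcongr
  calc μ (ball 0 (ρ + ε))
      = μ (ball 0 (ρ + ε)) ^ a * μ (ball 0 (ρ + ε)) ^ b := by
        rw [← ENNReal.rpow_add_of_nonneg _ _ ha₀.le hb₀.le, hab, ENNReal.rpow_one]
    _ ≤ μ (a⁻¹ • A) ^ a * μ (ball 0 (ρ + ε)) ^ b := by gcongr
    _ ≤ μ (a • a⁻¹ • A + b • ball (0 : E) (ρ + ε)) :=
        measure_rpow_mul_measure_rpow_le μ ha₀ hb₀ hab (hA.const_smul₀ _) measurableSet_ball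
    _ = μ (thickening ε A) := by
        rw [smul_inv_smul₀ ha₀.ne', _root_.smul_ball hb₀.ne', smul_zero,
          Real.norm_of_nonneg hb₀.le, hb, div_mul_cancel₀ _ hσ.ne', add_ball_zero]

end PrekopaLeindler

section FundamentalDomain

section Action

variable {G α : Type*} [AddGroup G] [Countable G] [AddAction G α] [MeasurableSpace α]
  [MeasurableConstVAdd G α] {μ : Measure α} [VAddInvariantMeasure G α μ] {F : Set α}

theorem measure_iUnion_vadd_inter_le (hF : IsAddFundamentalDomain G F μ) (S : Set α) :
    μ ((⋃ g : G, g +ᵥ S) ∩ F) ≤ μ S := by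
  rw [hF.measure_eq_tsum S, iUnion_inter]
  exact measure_iUnion_le _

theorem measure_iUnion_vadd_inter_eq (hF : IsAddFundamentalDomain G F μ) {S : Set α}
    (hS : NullMeasurableSet S μ) (hdisj : Pairwise fun g h : G => Disjoint (g +ᵥ S) (h +ᵥ S)) :
    μ ((⋃ g : G, g +ᵥ S) ∩ F) = μ S := by
  rw [hF.measure_eq_tsum S, iUnion_inter]
  exact measure_iUnion₀
    (fun g h hgh => ((hdisj hgh).mono inter_subset_left inter_subset_left).aedisjoint)
    fun g => (hS.vadd g).inter hF.nullMeasurableSet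

end Action

variable {E : Type*} [NormedAddCommGroup E] [MeasurableSpace E] [BorelSpace E] {μ : Measure E}
  [μ.IsAddLeftInvariant] {Λ : AddSubgroup E} [Countable Λ] {F : Set E}

-- Every tile meeting `ball 0 (R - D)` lies inside `ball 0 R`.
theorem measure_inter_mul_measure_ball_le (hF : IsAddFundamentalDomain Λ F μ) {S : Set E}
    (hS : ∀ z : Λ, z +ᵥ S = S) {D : ℝ} (hD : ∀ x ∈ F, ∀ y ∈ F, dist x y ≤ D) (R : ℝ) :
    μ (S ∩ F) * μ (ball 0 (R - D)) ≤ μ (S ∩ ball 0 R) * μ F := by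
  rw [hF.measure_eq_tsum' (ball 0 (R - D)), hF.measure_eq_tsum' (S ∩ ball 0 R),
    ← ENNReal.tsum_mul_left, ← ENNReal.tsum_mul_right]
  refine ENNReal.tsum_le_tsum fun z => ?_
  obtain hempty | ⟨_, hp, p, hpF, rfl⟩ := (ball (0 : E) (R - D) ∩ (z +ᵥ F)).eq_empty_or_nonempty
  · simp [hempty]
  have htile : z +ᵥ F ⊆ ball (0 : E) R := by
    rintro _ ⟨q, hq, rfl⟩
    calc dist (z +ᵥ q) 0 ≤ dist (z +ᵥ q) (z +ᵥ p) + dist (z +ᵥ p) 0 := dist_triangle _ _ _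
      _ < D + (R - D) := by
          refine add_lt_add_of_le_of_lt ?_ hp
          exact (dist_add_left (z : E) q p).trans_le (hD q hq p hpF)
      _ = R := by ring
  calc μ (S ∩ F) * μ (ball 0 (R - D) ∩ (z +ᵥ F))
      ≤ μ (z +ᵥ (S ∩ F)) * μ (z +ᵥ F) := by
        rw [measure_vadd]
        gcongr
        exact inter_subset_right
    _ = μ (S ∩ ball 0 R ∩ (z +ᵥ F)) * μ F := by
        rw [vadd_set_inter, hS, inter_assoc, inter_eq_right.2 htile, measure_vadd μ z F]

theorem measureReal_inter_div_mul_le [ProperSpace E] [IsFiniteMeasureOnCompacts μ]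
    (hF : IsAddFundamentalDomain Λ F μ) (hF_top : μ F ≠ ∞) {S : Set E}
    (hS : ∀ z : Λ, z +ᵥ S = S) {D : ℝ} (hD : ∀ x ∈ F, ∀ y ∈ F, dist x y ≤ D) (R : ℝ) :
    μ.real (S ∩ F) / μ.real F * (μ.real (ball 0 (R - D)) / μ.real (ball 0 R)) ≤
      μ.real (S ∩ ball 0 R) / μ.real (ball 0 R) := by
  have hSR : μ (S ∩ ball 0 R) ≠ ∞ :=
    measure_ne_top_of_subset inter_subset_right measure_ball_lt_top.ne
  have hcount : μ.real (S ∩ F) * μ.real (ball 0 (R - D)) ≤ μ.real (S ∩ ball 0 R) * μ.real F := by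
    simpa only [ENNReal.toReal_mul, ← measureReal_def] using
      ENNReal.toReal_mono (ENNReal.mul_ne_top hSR hF_top)
        (measure_inter_mul_measure_ball_le hF hS hD R)
  rw [← mul_div_assoc, div_mul_eq_mul_div]
  gcongr
  exact div_le_of_le_mul₀ measureReal_nonneg measureReal_nonneg hcount

end FundamentalDomain

theorem measureReal_ball_pos {E : Type*} [PseudoMetricSpace E] [ProperSpace E] [MeasurableSpace E]
    (μ : Measure E) [IsFiniteMeasureOnCompacts μ] [μ.IsOpenPosMeasure] (x : E) {r : ℝ}
    (hr : 0 < r) : 0 < μ.real (ball x r) :=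
  ENNReal.toReal_pos (measure_ball_pos μ x hr).ne' measure_ball_lt_top.ne

section BallMeasure

variable {E : Type*} [NormedAddCommGroup E] [NormedSpace ℝ E] [FiniteDimensional ℝ E]
  [MeasurableSpace E] [BorelSpace E] (μ : Measure E) [μ.IsAddHaarMeasure]

theorem measureReal_ball_eq_pow_mul (x : E) {r : ℝ} (hr : 0 < r) :
    μ.real (ball x r) = r ^ Module.finrank ℝ E * μ.real (ball 0 1) := by
  simp [measureReal_def, Measure.addHaar_ball_of_pos μ x hr, hr.le]

theorem tendsto_measureReal_ball_sub_div (D : ℝ) :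
    Tendsto (fun R => μ.real (ball 0 (R - D)) / μ.real (ball 0 R)) atTop (𝓝 1) := by
  have hlim : Tendsto (fun R : ℝ => (1 - D / R) ^ Module.finrank ℝ E) atTop (𝓝 1) := by
    simpa using ((tendsto_const_nhds (x := (1 : ℝ))).sub
      (tendsto_id.const_div_atTop D)).pow (Module.finrank ℝ E)
  refine hlim.congr' ?_
  filter_upwards [eventually_gt_atTop 0, eventually_gt_atTop D] with R hR hDR
  rw [measureReal_ball_eq_pow_mul μ 0 (sub_pos.2 hDR), measureReal_ball_eq_pow_mul μ 0 hR,
    mul_div_mul_right _ _ (measureReal_ball_pos μ 0 one_pos).ne', ← div_pow, one_sub_div hR.ne']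

end BallMeasure

theorem le_norm_of_mem_span_int_smul_orthonormalBasis {ι E : Type*} [Fintype ι]
    [NormedAddCommGroup E] [InnerProductSpace ℝ E] (b : OrthonormalBasis ι ℝ E) {M : ℝ}
    (hM : 0 ≤ M) {z : E} (hz : z ∈ Submodule.span ℤ (range fun i => M • b i)) (hz₀ : z ≠ 0) :
    M ≤ ‖z‖ := by
  obtain ⟨c, rfl⟩ := (Submodule.mem_span_range_iff_exists_fun ℤ).1 hz
  obtain ⟨j, hj⟩ : ∃ j, c j ≠ 0 := by
    by_contra! hc
    exact hz₀ (by simp [hc])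
  have hcoord : inner ℝ (b j) (∑ i, c i • M • b i) = c j * M := by
    simp [inner_sum, ← Int.cast_smul_eq_zsmul ℝ, inner_smul_right, b.inner_eq_ite]
  calc M ≤ |(c j : ℝ)| * M :=
        le_mul_of_one_le_left hM (by exact_mod_cast Int.one_le_abs hj)
    _ = |inner ℝ (b j) (∑ i, c i • M • b i)| := by rw [hcoord, abs_mul, abs_of_nonneg hM]
    _ ≤ ‖b j‖ * ‖∑ i, c i • M • b i‖ := abs_real_inner_le_norm _ _
    _ = ‖∑ i, c i • M • b i‖ := by rw [b.norm_eq_one, one_mul]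

theorem exists_isAddFundamentalDomain_le_norm {E : Type*} [NormedAddCommGroup E]
    [InnerProductSpace ℝ E] [FiniteDimensional ℝ E] [MeasurableSpace E] [BorelSpace E]
    (μ : Measure E) {M : ℝ} (hM : 0 < M) :
    ∃ (Λ : AddSubgroup E) (F : Set E), Countable Λ ∧ IsAddFundamentalDomain Λ F μ ∧
      Bornology.IsBounded F ∧ ∀ z ∈ Λ, z ≠ 0 → M ≤ ‖z‖ := by
  let b := stdOrthonormalBasis ℝ E
  let bM := b.toBasis.isUnitSMul fun _ => (isUnit_iff_ne_zero.2 hM.ne')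
  have hbM : ⇑bM = fun i => M • b i := by
    ext1 i
    simp [bM, Module.Basis.isUnitSMul_apply]
  refine ⟨(Submodule.span ℤ (range bM)).toAddSubgroup, ZSpan.fundamentalDomain bM,
    inferInstanceAs (Countable (Submodule.span ℤ (range bM))), ZSpan.isAddFundamentalDomain' bM μ,
    ZSpan.fundamentalDomain_isBounded bM, fun z hz hz₀ => ?_⟩
  exact le_norm_of_mem_span_int_smul_orthonormalBasis b hM.le (hbM ▸ hz) hz₀

section PeriodicallySeparated

/-- The translates of the finite set `X` by the subgroup `Λ` form a periodic family of points at
mutual distance at least `r`; in particular distinct pairs `(x, z)` give distinct points `x + z`. -/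
def PeriodicallySeparated {E : Type*} [NormedAddCommGroup E] (Λ : AddSubgroup E) (r : ℝ)
    (X : Finset E) : Prop :=
  ∀ x ∈ X, ∀ y ∈ X, ∀ z ∈ Λ, (x ≠ y ∨ z ≠ 0) → r ≤ dist x (y + z)

namespace PeriodicallySeparated

variable {E : Type*} [NormedAddCommGroup E] {Λ : AddSubgroup E} {r : ℝ} {X P : Finset E}

theorem of_le_norm (hX : (X : Set E).Pairwise fun x y => r ≤ dist x y) {D : ℝ}
    (hD : ∀ x ∈ X, ∀ y ∈ X, dist x y ≤ D) (hΛ : ∀ z ∈ Λ, z ≠ 0 → D + r ≤ ‖z‖) :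
    PeriodicallySeparated Λ r X := by
  intro x hx y hy z hz hxyz
  by_cases hz₀ : z = 0
  · subst hz₀
    rw [add_zero]
    exact hX hx hy (by simpa using hxyz)
  · have htri : ‖z‖ ≤ dist y x + dist x (y + z) := by
      simpa using dist_triangle y x (y + z)
    linarith [hΛ z hz hz₀, hD y hy x hx]

theorem le_dist_add (hX : PeriodicallySeparated Λ r X) {x y z w : E} (hx : x ∈ X) (hy : y ∈ X)
    (hz : z ∈ Λ) (hw : w ∈ Λ) (hne : x ≠ y ∨ z ≠ w) : r ≤ dist (z + x) (w + y) := by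
  have hdist : dist (z + x) (w + y) = dist x (y + (w - z)) := by
    rw [← dist_add_left z x, show z + (y + (w - z)) = w + y by abel]
  rw [hdist]
  exact hX x hx y hy (w - z) (Λ.sub_mem hw hz)
    (hne.imp_right fun h => sub_ne_zero.2 h.symm)

theorem pairwise_vadd (hX : PeriodicallySeparated Λ r X) :
    (⋃ z : Λ, z +ᵥ (X : Set E)).Pairwise fun p q => r ≤ dist p q := by
  intro p hp q hq hpq
  obtain ⟨z, x, hx, rfl⟩ := mem_iUnion.1 hp
  obtain ⟨w, y, hy, rfl⟩ := mem_iUnion.1 hq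
  refine hX.le_dist_add hx hy z.2 w.2 ?_
  by_contra! h
  exact hpq (by rw [h.1, Subtype.ext h.2])

theorem vadd_finset (hX : PeriodicallySeparated Λ r X) (t : E) :
    PeriodicallySeparated Λ r (t +ᵥ X) := by
  intro _ htx _ hty z hz hne
  obtain ⟨x, hx, rfl⟩ := Finset.mem_vadd_finset.1 htx
  obtain ⟨y, hy, rfl⟩ := Finset.mem_vadd_finset.1 hty
  rw [vadd_eq_add, vadd_eq_add, add_assoc, dist_add_left]
  exact hX x hx y hy z hz (hne.imp_left fun h hxy => h (hxy ▸ rfl))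

theorem union (hX : PeriodicallySeparated Λ r X) (hP : PeriodicallySeparated Λ r P)
    (hXP : ∀ x ∈ X, ∀ p ∈ P, ∀ z ∈ Λ, r ≤ dist x (p + z)) :
    PeriodicallySeparated Λ r (X ∪ P) := by
  intro x hx y hy z hz hne
  rcases Finset.mem_union.1 hx with hx | hx <;> rcases Finset.mem_union.1 hy with hy | hy
  · exact hX x hx y hy z hz hne
  · exact hXP x hx y hy z hz
  · have hdist : dist x (y + z) = dist y (x + -z) := by
      rw [dist_comm, ← dist_add_right (y + z) x (-z), add_neg_cancel_right]
    rw [hdist]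
    exact hXP y hy x hx (-z) (Λ.neg_mem hz)
  · exact hP x hx y hy z hz hne

theorem disjoint_vadd_thickening (hX : PeriodicallySeparated Λ r X) {z w : Λ} (hzw : z ≠ w) :
    Disjoint (z +ᵥ thickening (r / 2) (X : Set E)) (w +ᵥ thickening (r / 2) (X : Set E)) := by
  rw [Set.disjoint_left]
  rintro _ ⟨p, hp, rfl⟩ ⟨q, hq, hpq⟩
  obtain ⟨x, hx, hpx⟩ := mem_thickening_iff.1 hp
  obtain ⟨y, hy, hqy⟩ := mem_thickening_iff.1 hq
  have hsep := hX.le_dist_add hx hy z.2 w.2 (.inr (Subtype.coe_injective.ne hzw))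
  have htri := dist_triangle_left ((z : E) + x) (w + y) (z + p)
  have hpq : (w : E) + q = z + p := hpq
  rw [← dist_add_left (z : E)] at hpx
  rw [← dist_add_left (w : E), hpq] at hqy
  linarith

theorem pairwise (hX : PeriodicallySeparated Λ r X) :
    (X : Set E).Pairwise fun x y => r ≤ dist x y := fun x hx y hy hxy => by
  simpa using hX x hx y hy 0 Λ.zero_mem (.inl hxy)

section Measure

variable [MeasurableSpace E] [BorelSpace E] {μ : Measure E} [μ.IsAddHaarMeasure] [Countable Λ]
  {F : Set E}

theorem measure_iUnion_vadd_thickening_inter (hX : PeriodicallySeparated Λ r X)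
    (hF : IsAddFundamentalDomain Λ F μ) :
    μ ((⋃ z : Λ, z +ᵥ thickening (r / 2) (X : Set E)) ∩ F) = X.card * μ (ball 0 (r / 2)) := by
  have hdisj : (X : Set E).PairwiseDisjoint fun x => ball x (r / 2) := fun x hx y hy hxy =>
    ball_disjoint_ball (by linarith [hX.pairwise hx hy hxy])
  rw [measure_iUnion_vadd_inter_eq hF isOpen_thickening.measurableSet.nullMeasurableSet
    fun _ _ => hX.disjoint_vadd_thickening, thickening_eq_biUnion_ball]
  refine (measure_biUnion_finset hdisj fun _ _ => measurableSet_ball).trans ?_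
  simp_rw [Measure.addHaar_ball_center, Finset.sum_const, nsmul_eq_mul]

theorem card_mul_measure_ball_le (hX : PeriodicallySeparated Λ r X)
    (hF : IsAddFundamentalDomain Λ F μ) : X.card * μ (ball 0 (r / 2)) ≤ μ F :=
  (hX.measure_iUnion_vadd_thickening_inter hF).symm.trans_le (measure_mono inter_subset_right)

theorem exists_card_maximal (hr : 0 < r)
    (hP : PeriodicallySeparated Λ r P) (hF : IsAddFundamentalDomain Λ F μ) (hF_top : μ F ≠ ∞) :
    ∃ X, PeriodicallySeparated Λ r X ∧ ∀ Y, PeriodicallySeparated Λ r Y → Y.card ≤ X.card := by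
  have hball : μ (ball 0 (r / 2)) ≠ 0 := (measure_ball_pos μ 0 (half_pos hr)).ne'
  obtain ⟨N, hN⟩ := ENNReal.exists_nat_gt (ENNReal.div_ne_top hF_top hball)
  have hbdd : BddAbove (Finset.card '' {X | PeriodicallySeparated Λ r X}) := by
    refine ⟨N, ?_⟩
    rintro _ ⟨X, hX, rfl⟩
    have hXF : (X.card : ℝ≥0∞) ≤ μ F / μ (ball 0 (r / 2)) :=
      (ENNReal.le_div_iff_mul_le (.inl hball) (.inr hF_top)).2 (hX.card_mul_measure_ball_le hF)
    exact_mod_cast hXF.trans hN.le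
  obtain ⟨X, hX, hXmax⟩ := Nat.sSup_mem ⟨_, mem_image_of_mem _ hP⟩ hbdd
  exact ⟨X, hX, fun Y hY => (le_csSup hbdd ⟨Y, hY, rfl⟩).trans_eq hXmax.symm⟩

end Measure

end PeriodicallySeparated

/-- The translations `t` for which some point of the periodic family `t + P + Λ` comes closer
than `r` to `x`. -/
def collisionSet {E : Type*} [NormedAddCommGroup E] (Λ : AddSubgroup E) (r : ℝ) (P : Finset E)
    (x : E) : Set E :=
  {t | ∃ z ∈ Λ, ∃ p ∈ P, dist x (t + p + z) < r}

section collisionSet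

variable {E : Type*} [NormedAddCommGroup E] {Λ : AddSubgroup E} {r : ℝ} {X P : Finset E}

theorem collisionSet_eq_iUnion_vadd (Λ : AddSubgroup E) (r : ℝ) (P : Finset E) (x : E) :
    collisionSet Λ r P x = ⋃ z : Λ, z +ᵥ (fun t => x - t) ⁻¹' thickening r (P : Set E) := by
  have hdist (t z p : E) : dist x (t + p + z) = dist (x - (z + t)) p := by
    simp only [dist_eq_norm]
    congr 1
    abel
  ext t
  simp only [collisionSet, mem_ofPred_eq, hdist, mem_iUnion, mem_vadd_set_iff_neg_vadd_mem,
    mem_preimage, mem_thickening_iff, Finset.mem_coe]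
  exact ⟨fun ⟨z, hz, p, hp, h⟩ => ⟨-⟨z, hz⟩, p, hp, by rwa [neg_neg]⟩,
    fun ⟨z, p, hp, h⟩ => ⟨-z, Λ.neg_mem z.2, p, hp, h⟩⟩

theorem measure_collisionSet_inter_le [MeasurableSpace E] [BorelSpace E] {μ : Measure E}
    [μ.IsAddLeftInvariant] [μ.IsNegInvariant] [Countable Λ] {F : Set E}
    (hF : IsAddFundamentalDomain Λ F μ) (r : ℝ) (P : Finset E) (x : E) :
    μ (collisionSet Λ r P x ∩ F) ≤ μ (thickening r (P : Set E)) := by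
  rw [collisionSet_eq_iUnion_vadd, ← (Measure.measurePreserving_sub_left μ x).measure_preimage
    isOpen_thickening.measurableSet.nullMeasurableSet]
  exact measure_iUnion_vadd_inter_le hF _

theorem isOpen_collisionSet (Λ : AddSubgroup E) (r : ℝ) (P : Finset E) (x : E) :
    IsOpen (collisionSet Λ r P x) := by
  rw [collisionSet_eq_iUnion_vadd]
  exact isOpen_iUnion fun z => (isOpen_thickening.preimage (by fun_prop)).vadd z

-- Replacing the points of `X` that collide with `t + P` by `t + P` keeps the family separated.
theorem PeriodicallySeparated.card_le_card_filter_mem_collisionSet (hr : 0 < r)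
    (hX : PeriodicallySeparated Λ r X)
    (hX_max : ∀ Y, PeriodicallySeparated Λ r Y → Y.card ≤ X.card)
    (hP : PeriodicallySeparated Λ r P) (t : E) :
    P.card ≤ (X.filter fun x => t ∈ collisionSet Λ r P x).card := by
  set X' := X.filter fun x => t ∉ collisionSet Λ r P x
  have hfar : ∀ x ∈ X', ∀ q ∈ t +ᵥ P, ∀ z ∈ Λ, r ≤ dist x (q + z) := by
    intro x hx q hq z hz
    obtain ⟨p, hp, rfl⟩ := Finset.mem_vadd_finset.1 hq
    exact not_lt.1 fun hlt => (Finset.mem_filter.1 hx).2 ⟨z, hz, p, hp, hlt⟩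
  have hdisj : Disjoint X' (t +ᵥ P) := Finset.disjoint_left.2 fun x hx hxP => by
    simpa using hr.trans_le (hfar x hx x hxP 0 Λ.zero_mem)
  have hX'_sep : PeriodicallySeparated Λ r X' := fun x hx y hy =>
    hX x (Finset.mem_of_mem_filter x hx) y (Finset.mem_of_mem_filter y hy)
  have hcard := hX_max _ (hX'_sep.union (hP.vadd_finset t) hfar)
  rw [Finset.card_union_of_disjoint hdisj, Finset.card_vadd_finset] at hcard
  have hsplit : (X.filter fun x => t ∈ collisionSet Λ r P x).card + X'.card = X.card :=
    X.card_filter_add_card_filter_not _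
  omega

theorem PeriodicallySeparated.card_mul_measure_le [MeasurableSpace E] [BorelSpace E]
    {μ : Measure E} [μ.IsAddLeftInvariant] [μ.IsNegInvariant] [Countable Λ] {F : Set E}
    (hr : 0 < r) (hX : PeriodicallySeparated Λ r X)
    (hX_max : ∀ Y, PeriodicallySeparated Λ r Y → Y.card ≤ X.card)
    (hP : PeriodicallySeparated Λ r P) (hF : IsAddFundamentalDomain Λ F μ) :
    P.card * μ F ≤ X.card * μ (thickening r (P : Set E)) := by
  have hmeas (x : E) := (isOpen_collisionSet Λ r P x).measurableSet
  calc P.card * μ F = ∫⁻ _ in F, (P.card : ℝ≥0∞) ∂μ := (setLIntegral_const F _).symm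
    _ ≤ ∫⁻ t in F, ∑ x ∈ X, (collisionSet Λ r P x).indicator 1 t ∂μ := by
        refine lintegral_mono fun t => ?_
        calc (P.card : ℝ≥0∞) ≤ (X.filter fun x => t ∈ collisionSet Λ r P x).card := by
              exact_mod_cast hX.card_le_card_filter_mem_collisionSet hr hX_max hP t
          _ = ∑ x ∈ X, (collisionSet Λ r P x).indicator 1 t := by simp [indicator]
    _ = ∑ x ∈ X, μ (collisionSet Λ r P x ∩ F) := by
        rw [lintegral_finsetSum _ fun x _ => measurable_one.indicator (hmeas x)]
        simp only [lintegral_indicator_one (hmeas _), Measure.restrict_apply (hmeas _)]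
    _ ≤ ∑ _x ∈ X, μ (thickening r (P : Set E)) :=
        Finset.sum_le_sum fun x _ => measure_collisionSet_inter_le hF r P x
    _ = X.card * μ (thickening r (P : Set E)) := by rw [Finset.sum_const, nsmul_eq_mul]

end collisionSet

end PeriodicallySeparated

section Density

section CoveredFraction

variable {E : Type*} [NormedAddCommGroup E] [MeasurableSpace E] {μ : Measure E}

/-- The fraction of `ball 0 R` covered by the closed unit balls centred at `C`, so that the upper
density of this family of balls is the upper limit as `R → ∞`. -/
def coveredFraction (μ : Measure E) (C : Set E) (R : ℝ) : ℝ :=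
  μ.real ((⋃ c ∈ C, closedBall c 1) ∩ ball 0 R) / μ.real (ball 0 R)

theorem coveredFraction_nonneg (μ : Measure E) (C : Set E) (R : ℝ) :
    0 ≤ coveredFraction μ C R := by
  unfold coveredFraction
  positivity

theorem coveredFraction_le_one [ProperSpace E] (μ : Measure E) [IsFiniteMeasureOnCompacts μ]
    (C : Set E) (R : ℝ) :
    coveredFraction μ C R ≤ 1 :=
  div_le_one_of_le₀ (measureReal_mono inter_subset_right measure_ball_lt_top.ne) measureReal_nonneg

theorem PeriodicallySeparated.le_coveredFraction [ProperSpace E] [BorelSpace E]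
    [μ.IsAddHaarMeasure] {Λ : AddSubgroup E} [Countable Λ] {F : Set E} {X : Finset E}
    (hX : PeriodicallySeparated Λ 2 X) (hF : IsAddFundamentalDomain Λ F μ) (hF_top : μ F ≠ ∞)
    {D : ℝ} (hD : ∀ x ∈ F, ∀ y ∈ F, dist x y ≤ D) (R : ℝ) :
    X.card * μ.real (ball 0 1) / μ.real F * (μ.real (ball 0 (R - D)) / μ.real (ball 0 R)) ≤
      coveredFraction μ (⋃ z : Λ, z +ᵥ (X : Set E)) R := by
  set T := thickening (2 / 2) (X : Set E)
  have hinv (w : Λ) : w +ᵥ (⋃ z : Λ, z +ᵥ T) = ⋃ z : Λ, z +ᵥ T := by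
    simp only [vadd_set_iUnion, vadd_vadd]
    exact (Equiv.addLeft w).iSup_comp (g := fun z => z +ᵥ T)
  have hT_sub : (⋃ z : Λ, z +ᵥ T) ⊆ ⋃ c ∈ ⋃ z : Λ, z +ᵥ (X : Set E), closedBall c 1 := by
    refine iUnion_subset fun z => ?_
    rintro _ ⟨p, hp, rfl⟩
    obtain ⟨x, hx, hpx⟩ := mem_thickening_iff.1 hp
    refine mem_iUnion₂.2 ⟨z +ᵥ x, mem_iUnion.2 ⟨z, vadd_mem_vadd_set hx⟩, ?_⟩
    exact (dist_add_left (z : E) p x).trans_le (by simpa using hpx.le)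
  have hcell : X.card * μ.real (ball 0 1) = μ.real ((⋃ z : Λ, z +ᵥ T) ∩ F) := by
    rw [measureReal_def, measureReal_def, hX.measure_iUnion_vadd_thickening_inter hF, div_self
      two_ne_zero, ENNReal.toReal_mul, ENNReal.toReal_natCast]
  rw [hcell]
  refine (measureReal_inter_div_mul_le hF hF_top hinv hD R).trans ?_
  unfold coveredFraction
  gcongr
  exact measure_ne_top_of_subset inter_subset_right measure_ball_lt_top.ne

end CoveredFraction

variable {d : ℕ}

theorem limsup_coveredFraction_le_spherePackingDensity {C : Set (EuclideanSpace ℝ (Fin d))}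
    (hC : C.Pairwise fun p q => 2 ≤ dist p q) :
    limsup (coveredFraction volume C) atTop ≤ spherePackingDensity d := by
  refine le_csSup ⟨1, ?_⟩ ⟨C, hC, rfl⟩
  rintro _ ⟨C', -, rfl⟩
  exact limsup_le_of_le
    (isBoundedUnder_of ⟨0, coveredFraction_nonneg volume C'⟩).isCoboundedUnder_le
    (.of_forall (coveredFraction_le_one volume C'))

theorem PeriodicallySeparated.card_mul_volume_ball_le
    {Λ : AddSubgroup (EuclideanSpace ℝ (Fin d))} [Countable Λ]
    {F : Set (EuclideanSpace ℝ (Fin d))} {X : Finset (EuclideanSpace ℝ (Fin d))}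
    (hX : PeriodicallySeparated Λ 2 X) (hF : IsAddFundamentalDomain Λ F)
    (hF_bdd : Bornology.IsBounded F) :
    X.card * volume.real (ball (0 : EuclideanSpace ℝ (Fin d)) 1) ≤
      spherePackingDensity d * volume.real F := by
  have hF_pos : 0 < volume.real F :=
    ENNReal.toReal_pos (hF.measure_ne_zero (NeZero.ne _)) hF_bdd.measure_lt_top.ne
  obtain ⟨D, hD⟩ := isBounded_iff.1 hF_bdd
  set c := X.card * volume.real (ball (0 : EuclideanSpace ℝ (Fin d)) 1) / volume.real F
  set C := ⋃ z : Λ, z +ᵥ (X : Set (EuclideanSpace ℝ (Fin d)))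
  have hlim := (tendsto_measureReal_ball_sub_div
    (volume : Measure (EuclideanSpace ℝ (Fin d))) D).const_mul c
  rw [mul_one] at hlim
  rw [← div_le_iff₀ hF_pos]
  calc c = limsup (fun R => c * (volume.real (ball 0 (R - D)) / volume.real (ball 0 R))) atTop :=
        hlim.limsup_eq.symm
    _ ≤ limsup (coveredFraction volume C) atTop :=
        limsup_le_limsup
          (.of_forall <|
            hX.le_coveredFraction hF hF_bdd.measure_lt_top.ne fun x hx y hy => hD hx hy)
          hlim.isBoundedUnder_ge.isCoboundedUnder_le
          (isBoundedUnder_of ⟨1, coveredFraction_le_one volume C⟩)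
    _ ≤ spherePackingDensity d := limsup_coveredFraction_le_spherePackingDensity hX.pairwise_vadd

theorem card_mul_volume_ball_le_spherePackingDensity_mul {P : Finset (EuclideanSpace ℝ (Fin d))}
    (hP : (P : Set (EuclideanSpace ℝ (Fin d))).Pairwise fun x y => 2 ≤ dist x y) :
    P.card * volume.real (ball (0 : EuclideanSpace ℝ (Fin d)) 1) ≤
      spherePackingDensity d * volume.real (thickening 2 (P : Set (EuclideanSpace ℝ (Fin d)))) := by
  obtain ⟨D, hD₀, hD⟩ := (isBounded_iff_exists_ge 0).1 P.finite_toSet.isBounded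
  obtain ⟨Λ, F, hΛ, hF, hF_bdd, hΛ_norm⟩ :=
    exists_isAddFundamentalDomain_le_norm (volume : Measure (EuclideanSpace ℝ (Fin d)))
      (M := D + 2) (by positivity)
  have hF_top : volume F ≠ ∞ := hF_bdd.measure_lt_top.ne
  have hF_pos : 0 < volume.real F :=
    ENNReal.toReal_pos (hF.measure_ne_zero (NeZero.ne _)) hF_top
  have hP_sep : PeriodicallySeparated Λ 2 P :=
    .of_le_norm hP (fun x hx y hy => hD hx hy) hΛ_norm
  obtain ⟨X, hX, hX_max⟩ := hP_sep.exists_card_maximal two_pos hF hF_top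
  set κ := volume.real (ball (0 : EuclideanSpace ℝ (Fin d)) 1)
  set u := volume.real (thickening 2 (P : Set (EuclideanSpace ℝ (Fin d))))
  have hreplace : P.card * volume.real F ≤ X.card * u := by
    simpa [measureReal_def, u] using ENNReal.toReal_mono
      (ENNReal.mul_ne_top (ENNReal.natCast_ne_top _)
        P.finite_toSet.isBounded.thickening.measure_lt_top.ne)
      (hX.card_mul_measure_le two_pos hX_max hP_sep hF)
  have hdensity : X.card * κ ≤ spherePackingDensity d * volume.real F :=
    hX.card_mul_volume_ball_le hF hF_bdd
  refine le_of_mul_le_mul_right ?_ hF_pos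
  calc P.card * κ * volume.real F = P.card * volume.real F * κ := by ring
    _ ≤ X.card * u * κ := by gcongr
    _ = X.card * κ * u := by ring
    _ ≤ spherePackingDensity d * volume.real F * u := by gcongr
    _ = spherePackingDensity d * u * volume.real F := by ring

end Density

section Kissing

/-- The centres of non-overlapping unit balls that all touch the unit ball centred at the origin,
as in the definition of `kissingNumber`. -/
structure IsKissing {E : Type*} [NormedAddCommGroup E] (S : Finset E) : Prop where
  norm_eq_two : ∀ v ∈ S, ‖v‖ = 2
  pairwise : (S : Set E).Pairwise fun v w => 2 ≤ dist v w

namespace IsKissing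

theorem insert {E : Type*} [NormedAddCommGroup E] [DecidableEq E] {S : Finset E}
    (hS : IsKissing S) {v : E} (hv : ‖v‖ = 2) (hSv : ∀ w ∈ S, 2 ≤ dist v w) :
    IsKissing (insert v S) where
  norm_eq_two := Finset.forall_mem_insert _ _ _ |>.2 ⟨hv, hS.norm_eq_two⟩
  pairwise := by
    rw [Finset.coe_insert, pairwise_insert]
    exact ⟨hS.pairwise, fun w hw _ => ⟨hSv w hw, dist_comm v w ▸ hSv w hw⟩⟩

theorem card_le_five_pow {E : Type*} [NormedAddCommGroup E] [NormedSpace ℝ E]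
    [FiniteDimensional ℝ E] {S : Finset E} (hS : IsKissing S) :
    S.card ≤ 5 ^ Module.finrank ℝ E := by
  have hinj : Function.Injective ((2 : ℝ)⁻¹ • · : E → E) := smul_right_injective E (by norm_num)
  rw [← Finset.card_image_of_injective S hinj]
  refine Besicovitch.card_le_of_separated _ ?_ ?_
  · simp only [Finset.forall_mem_image]
    intro v hv
    rw [norm_smul, hS.norm_eq_two v hv]
    norm_num
  · simp only [Finset.forall_mem_image]
    intro v hv w hw hvw
    have hsep := hS.pairwise hv hw (ne_of_apply_ne _ hvw)
    rw [← smul_sub, norm_smul, ← dist_eq_norm]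
    norm_num
    linarith

variable {d : ℕ} {S : Finset (EuclideanSpace ℝ (Fin d))}

theorem card_le_kissingNumber (hS : IsKissing S) : S.card ≤ kissingNumber d := by
  refine le_csSup ⟨5 ^ d, ?_⟩ ⟨fun i => S.equivFin.symm i, ?_, ?_⟩
  · rintro m ⟨c, hc, hsep⟩
    have hinj : Function.Injective c := fun i j hij => by
      by_contra hne
      exact (hsep i j hne).not_gt (by simp [hij])
    have hkiss : IsKissing (Finset.univ.image c) := by
      refine ⟨by simpa using hc, ?_⟩
      rw [Finset.coe_image, Finset.coe_univ, image_univ]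
      rintro _ ⟨i, rfl⟩ _ ⟨j, rfl⟩ hij
      exact hsep i j (ne_of_apply_ne c hij)
    simpa [Finset.card_image_of_injective _ hinj] using hkiss.card_le_five_pow
  · intro i
    rw [dist_zero_right]
    exact hS.norm_eq_two _ (S.equivFin.symm i).2
  · exact fun i j hij => hS.pairwise (S.equivFin.symm i).2 (S.equivFin.symm j).2
      (Subtype.coe_injective.ne (S.equivFin.symm.injective.ne hij))

theorem card_add_one_le_kissingNumber (hS : IsKissing S) {v : EuclideanSpace ℝ (Fin d)}
    (hv : ‖v‖ = 2) (hSv : ∀ w ∈ S, 2 ≤ dist v w) : S.card + 1 ≤ kissingNumber d := by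
  have hvS : v ∉ S := fun h => (hSv v h).not_gt (by simp)
  simpa [hvS] using (hS.insert hv hSv).card_le_kissingNumber

theorem exists_dist_lt_norm (hS : IsKissing S) (hcard : kissingNumber d ≤ S.card)
    {x : EuclideanSpace ℝ (Fin d)} (hx : 2 ≤ ‖x‖) : ∃ v ∈ S, dist x v < ‖x‖ := by
  set u := (2 / ‖x‖) • x
  have hu : ‖u‖ = 2 := by
    rw [norm_smul, norm_div, norm_norm, Real.norm_two, div_mul_cancel₀ _ (by linarith)]
  have hxu : dist x u = ‖x‖ - 2 := by
    have hsub : x - u = (1 - 2 / ‖x‖) • x := by rw [sub_smul, one_smul]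
    have hnonneg : 0 ≤ 1 - 2 / ‖x‖ := sub_nonneg.2 (div_le_one_of_le₀ hx (norm_nonneg x))
    rw [dist_eq_norm, hsub, norm_smul, Real.norm_of_nonneg hnonneg]
    field_simp
  obtain ⟨v, hv, huv⟩ : ∃ v ∈ S, dist u v < 2 := by
    by_contra! hfar
    exact (hS.card_add_one_le_kissingNumber hu hfar).not_gt (Nat.lt_succ_of_le hcard)
  exact ⟨v, hv, by linarith [dist_triangle x u v]⟩

end IsKissing

section Hemisphere

variable {E : Type*} [NormedAddCommGroup E] [InnerProductSpace ℝ E] {e f : E}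

theorem norm_sqrt_three_smul_add (he : ‖e‖ = 1) (hf : ‖f‖ = 1) (hef : inner ℝ e f = 0) :
    ‖√3 • e + f‖ = 2 := by
  have hsq : ‖√3 • e + f‖ ^ 2 = 2 ^ 2 := by
    rw [norm_add_sq_real, norm_smul, he, hf, real_inner_smul_left, hef, mul_one,
      Real.norm_of_nonneg (Real.sqrt_nonneg 3), Real.sq_sqrt (by norm_num)]
    norm_num
  exact (pow_left_inj₀ (norm_nonneg _) zero_le_two two_ne_zero).1 hsq

theorem two_le_dist_sqrt_three_smul_add (he : ‖e‖ = 1) (hf : ‖f‖ = 1) (hef : inner ℝ e f = 0)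
    {v : E} (hv : ‖v‖ = 2) (hev : inner ℝ e v ≤ 0) : 2 ≤ dist (√3 • e + f) v := by
  have hinner : inner ℝ (√3 • e + f) v ≤ 2 :=
    calc inner ℝ (√3 • e + f) v = √3 * inner ℝ e v + inner ℝ f v := by
          rw [inner_add_left, real_inner_smul_left]
      _ ≤ 0 + ‖f‖ * ‖v‖ := add_le_add (mul_nonpos_of_nonneg_of_nonpos (Real.sqrt_nonneg 3) hev)
          (real_inner_le_norm f v)
      _ = 2 := by rw [hf, hv]; norm_num
  rw [dist_eq_norm, ← abs_of_nonneg (norm_nonneg _), ← abs_two, ← sq_le_sq, norm_sub_sq_real,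
    norm_sqrt_three_smul_add he hf hef, hv]
  linarith

end Hemisphere

-- The vectors `√3 e ± f` of norm `2` make an angle of at least `π / 3` with the half-space
-- `{v | ⟪e, v⟫ ≤ 0}` and with each other.
theorem IsKissing.card_add_two_le_kissingNumber {d : ℕ} {S : Finset (EuclideanSpace ℝ (Fin d))}
    (hS : IsKissing S) {e f : EuclideanSpace ℝ (Fin d)} (he : ‖e‖ = 1) (hf : ‖f‖ = 1)
    (hef : inner ℝ e f = 0) (hSe : ∀ v ∈ S, inner ℝ e v ≤ 0) : S.card + 2 ≤ kissingNumber d := by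
  have hf' : ‖-f‖ = 1 := (norm_neg f).trans hf
  have hef' : inner ℝ e (-f) = 0 := by rw [inner_neg_right, hef, neg_zero]
  have hSu (v) (hv : v ∈ S) : 2 ≤ dist (√3 • e + f) v :=
    two_le_dist_sqrt_three_smul_add he hf hef (hS.norm_eq_two v hv) (hSe v hv)
  have hSw (v) (hv : v ∈ S) : 2 ≤ dist (√3 • e + -f) v :=
    two_le_dist_sqrt_three_smul_add he hf' hef' (hS.norm_eq_two v hv) (hSe v hv)
  have hwu : 2 ≤ dist (√3 • e + -f) (√3 • e + f) := by
    rw [dist_add_left, dist_comm, dist_eq_norm, sub_neg_eq_add, ← two_smul ℝ, norm_smul, hf]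
    norm_num
  have huS : √3 • e + f ∉ S := fun h => (hSu _ h).not_gt (by simp)
  have hS_insert := hS.insert (norm_sqrt_three_smul_add he hf hef) hSu
  have hcard := hS_insert.card_add_one_le_kissingNumber (norm_sqrt_three_smul_add he hf' hef')
    (Finset.forall_mem_insert _ _ _ |>.2 ⟨hwu, hSw⟩)
  rwa [Finset.card_insert_of_notMem huS] at hcard

end Kissing

section Contacts

/-- The vectors from `p` to the points of `P` at distance exactly `2` from `p`. -/
def contactVectors {E : Type*} [NormedAddCommGroup E] (P : Finset E) (p : E) : Finset E :=
  (P.image (· - p)).filter (‖·‖ = 2)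

theorem mem_contactVectors {E : Type*} [NormedAddCommGroup E] {P : Finset E} {p v : E} :
    v ∈ contactVectors P p ↔ p + v ∈ P ∧ ‖v‖ = 2 := by
  simp [contactVectors, sub_eq_iff_eq_add']

theorem isKissing_contactVectors {E : Type*} [NormedAddCommGroup E] {P : Finset E}
    (hP : (P : Set E).Pairwise fun x y => 2 ≤ dist x y) (p : E) :
    IsKissing (contactVectors P p) where
  norm_eq_two _ hv := (mem_contactVectors.1 hv).2
  pairwise v hv w hw hvw := by
    simpa only [dist_add_left] using hP (mem_contactVectors.1 hv).1 (mem_contactVectors.1 hw).1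
      ((add_right_injective p).ne hvw)

variable {d : ℕ} {P : Finset (EuclideanSpace ℝ (Fin d))}

theorem contactsOrdered_eq_sum_card_contactVectors (P : Finset (EuclideanSpace ℝ (Fin d))) :
    contactsOrdered P = ∑ p ∈ P, (contactVectors P p).card := by
  rw [contactsOrdered, ← Finset.card_sigma]
  refine Finset.card_nbij' (fun x => ⟨x.1, x.2 - x.1⟩) (fun x => (x.1, x.1 + x.2)) ?_ ?_ ?_ ?_
  · rintro ⟨p, q⟩ h
    simp_all [mem_contactVectors, ← dist_eq_norm, dist_comm]
  · rintro ⟨p, v⟩ h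
    have hv : v ≠ 0 := by
      rintro rfl
      simp_all [mem_contactVectors]
    simp_all [mem_contactVectors]
  · intro x _
    simp
  · intro x _
    simp

theorem exists_card_contactVectors_add_two_le (hd : 2 ≤ d)
    (hP : (P : Set (EuclideanSpace ℝ (Fin d))).Pairwise fun x y => 2 ≤ dist x y)
    (hP_ne : P.Nonempty) : ∃ p ∈ P, (contactVectors P p).card + 2 ≤ kissingNumber d := by
  set b := EuclideanSpace.basisFun (Fin d) ℝ
  let i : Fin d := ⟨0, by omega⟩
  let j : Fin d := ⟨1, by omega⟩
  obtain ⟨p, hp, hp_max⟩ := P.exists_max_image (inner ℝ (b i)) hP_ne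
  refine ⟨p, hp, (isKissing_contactVectors hP p).card_add_two_le_kissingNumber
    (b.norm_eq_one i) (b.norm_eq_one j) (b.inner_eq_zero (by simp [i, j])) fun v hv => ?_⟩
  have hle := hp_max _ (mem_contactVectors.1 hv).1
  rw [inner_add_right] at hle
  linarith

/-- The points of `P` that touch fewer than `kissingNumber d` others. -/
def unsaturated (P : Finset (EuclideanSpace ℝ (Fin d))) : Finset (EuclideanSpace ℝ (Fin d)) :=
  P.filter fun p => (contactVectors P p).card < kissingNumber d

theorem contactsOrdered_add_card_unsaturated_lt (hd : 2 ≤ d)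
    (hP : (P : Set (EuclideanSpace ℝ (Fin d))).Pairwise fun x y => 2 ≤ dist x y)
    (hP_ne : P.Nonempty) :
    contactsOrdered P + (unsaturated P).card < kissingNumber d * P.card := by
  rw [contactsOrdered_eq_sum_card_contactVectors, unsaturated, Finset.card_filter,
    ← Finset.sum_add_distrib, mul_comm, ← smul_eq_mul, ← Finset.sum_const]
  refine Finset.sum_lt_sum (fun p _ => ?_) ?_
  · have hle := (isKissing_contactVectors hP p).card_le_kissingNumber
    split_ifs <;> omega
  · obtain ⟨p, hp, hle⟩ := exists_card_contactVectors_add_two_le hd hP hP_ne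
    exact ⟨p, hp, by split_ifs <;> omega⟩

theorem mem_unsaturated_of_forall_dist_le
    (hP : (P : Set (EuclideanSpace ℝ (Fin d))).Pairwise fun x y => 2 ≤ dist x y)
    {p x : EuclideanSpace ℝ (Fin d)} (hp : p ∈ P) (hp_min : ∀ q ∈ P, dist x p ≤ dist x q)
    (hxp : 2 ≤ dist x p) : p ∈ unsaturated P := by
  refine Finset.mem_filter.2 ⟨hp, not_le.1 fun hsat => ?_⟩
  rw [dist_eq_norm] at hxp
  obtain ⟨v, hv, hlt⟩ := (isKissing_contactVectors hP p).exists_dist_lt_norm hsat hxp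
  refine (hp_min _ (mem_contactVectors.1 hv).1).not_gt ?_
  rwa [← dist_eq_norm, dist_sub_eq_dist_add_left, add_comm v p] at hlt

theorem thickening_add_subset
    (hP : (P : Set (EuclideanSpace ℝ (Fin d))).Pairwise fun x y => 2 ≤ dist x y) (ε : ℝ) :
    thickening (2 + ε) (P : Set (EuclideanSpace ℝ (Fin d))) ⊆
      thickening 2 (P : Set (EuclideanSpace ℝ (Fin d))) ∪
        ⋃ p ∈ unsaturated P, ball p (2 + ε) \ ball p 2 := by
  intro x hx
  obtain ⟨q, hq, hxq⟩ := mem_thickening_iff.1 hx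
  obtain ⟨p, hp, hp_min⟩ := P.exists_min_image (dist x) ⟨q, hq⟩
  obtain hxp | hxp := lt_or_ge (dist x p) 2
  · exact .inl (mem_thickening_iff.2 ⟨p, hp, hxp⟩)
  · exact .inr <| mem_biUnion (mem_unsaturated_of_forall_dist_le hP hp hp_min hxp)
      ⟨(hp_min q hq).trans_lt hxq, hxp.not_gt⟩

end Contacts

section Growth

theorem pow_le_mul_pow_of_add_pow_sub_pow_le {a b m : ℝ} {n : ℕ} (hn : n ≠ 0)
    (h : ∀ ε > 0, (a + ε) ^ n - a ^ n ≤ m * ((b + ε) ^ n - b ^ n)) :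
    a ^ (n - 1) ≤ m * b ^ (n - 1) := by
  have hslope (c : ℝ) :
      Tendsto (fun ε : ℝ => ε⁻¹ * ((c + ε) ^ n - c ^ n)) (𝓝[>] 0) (𝓝 (n * c ^ (n - 1))) := by
    simpa using (hasDerivAt_pow n c).tendsto_slope_zero_right
  have hlim : n * a ^ (n - 1) ≤ m * (n * b ^ (n - 1)) := by
    refine le_of_tendsto_of_tendsto (hslope a) ((hslope b).const_mul m) ?_
    filter_upwards [self_mem_nhdsWithin] with ε (hε : 0 < ε)
    rw [mul_left_comm]
    gcongr
    exact h ε hε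
  refine le_of_mul_le_mul_left ?_ (Nat.cast_pos.2 hn.bot_lt : (0 : ℝ) < n)
  rwa [mul_left_comm]

theorem pow_le_card_mul_pow_of_thickening_subset {E : Type*} [NormedAddCommGroup E]
    [NormedSpace ℝ E] [FiniteDimensional ℝ E] [Nontrivial E] [MeasurableSpace E] [BorelSpace E]
    {μ : Measure E} [μ.IsAddHaarMeasure] {A : Set E} (hA : IsOpen A) (hA_top : μ A ≠ ∞)
    {Q : Finset E} {r ρ : ℝ} (hr : 0 < r) (hρ : 0 < ρ) (hAρ : μ A = μ (ball 0 ρ))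
    (hcover : ∀ ε > 0, thickening ε A ⊆ A ∪ ⋃ q ∈ Q, ball q (r + ε) \ ball q r) :
    ρ ^ (Module.finrank ℝ E - 1) ≤ Q.card * r ^ (Module.finrank ℝ E - 1) := by
  have hκ : 0 < μ.real (ball 0 1) := measureReal_ball_pos μ 0 one_pos
  refine pow_le_mul_pow_of_add_pow_sub_pow_le Module.finrank_pos.ne' fun ε hε => ?_
  have hannulus (q : E) : μ.real (ball q (r + ε) \ ball q r) =
      ((r + ε) ^ Module.finrank ℝ E - r ^ Module.finrank ℝ E) * μ.real (ball 0 1) := by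
    rw [measureReal_sdiff (ball_subset_ball (by linarith)) measurableSet_ball,
      measureReal_ball_eq_pow_mul μ q hr, measureReal_ball_eq_pow_mul μ q (add_pos hr hε), sub_mul]
  have hannuli_top : μ (⋃ q ∈ Q, ball q (r + ε) \ ball q r) ≠ ∞ :=
    (measure_biUnion_lt_top Q.finite_toSet fun q _ =>
      (measure_mono sdiff_subset).trans_lt measure_ball_lt_top).ne
  have hgrowth : μ.real (ball 0 (ρ + ε)) ≤ μ.real (ball 0 ρ) +
      Q.card * (((r + ε) ^ Module.finrank ℝ E - r ^ Module.finrank ℝ E) * μ.real (ball 0 1)) :=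
    calc μ.real (ball 0 (ρ + ε))
      _ ≤ μ.real (A ∪ ⋃ q ∈ Q, ball q (r + ε) \ ball q r) :=
          ENNReal.toReal_mono (measure_union_ne_top hA_top hannuli_top) <|
            (measure_ball_add_le_measure_thickening μ hA.measurableSet hρ hε hAρ.ge).trans
              (measure_mono (hcover ε hε))
      _ ≤ μ.real A + ∑ q ∈ Q, μ.real (ball q (r + ε) \ ball q r) :=
          (measureReal_union_le _ _).trans (by gcongr; exact measureReal_biUnion_finset_le _ _)
      _ = _ := by simp_rw [hannulus, Finset.sum_const, nsmul_eq_mul, measureReal_def, hAρ]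
  rw [measureReal_ball_eq_pow_mul μ 0 hρ,
    measureReal_ball_eq_pow_mul μ 0 (add_pos hρ hε)] at hgrowth
  refine le_of_mul_le_mul_right ?_ hκ
  linarith

variable {d : ℕ} {P : Finset (EuclideanSpace ℝ (Fin d))}

theorem pow_le_card_unsaturated_mul_two_pow (hd : d ≠ 0)
    (hP : (P : Set (EuclideanSpace ℝ (Fin d))).Pairwise fun x y => 2 ≤ dist x y) {ρ : ℝ}
    (hρ : 0 < ρ) (hPρ : volume (thickening 2 (P : Set (EuclideanSpace ℝ (Fin d)))) =
      volume (ball (0 : EuclideanSpace ℝ (Fin d)) ρ)) :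
    ρ ^ (d - 1) ≤ (unsaturated P).card * 2 ^ (d - 1) := by
  have : NeZero d := ⟨hd⟩
  simpa using pow_le_card_mul_pow_of_thickening_subset isOpen_thickening
    P.finite_toSet.isBounded.thickening.measure_lt_top.ne two_pos hρ hPρ fun ε hε => by
      rw [thickening_thickening hε two_pos, add_comm]
      exact thickening_add_subset hP ε

theorem exists_measure_ball_eq {E : Type*} [NormedAddCommGroup E] [NormedSpace ℝ E]
    [FiniteDimensional ℝ E] [Nontrivial E] [MeasurableSpace E] [BorelSpace E] (μ : Measure E)
    [μ.IsAddHaarMeasure] {c : ℝ≥0∞} (hc₀ : c ≠ 0) (hc_top : c ≠ ∞) :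
    ∃ ρ > 0, μ (ball 0 ρ) = c := by
  have hκ := measureReal_ball_pos μ 0 one_pos
  have hcκ : 0 < c.toReal / μ.real (ball 0 1) := div_pos (ENNReal.toReal_pos hc₀ hc_top) hκ
  refine ⟨(c.toReal / μ.real (ball 0 1)) ^ (Module.finrank ℝ E : ℝ)⁻¹,
    Real.rpow_pos_of_pos hcκ _, ?_⟩
  rw [← ENNReal.toReal_eq_toReal_iff' measure_ball_lt_top.ne hc_top, ← measureReal_def,
    measureReal_ball_eq_pow_mul μ 0 (Real.rpow_pos_of_pos hcκ _),
    Real.rpow_inv_natCast_pow hcκ.le Module.finrank_pos.ne', div_mul_cancel₀ _ hκ.ne']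

theorem card_le_spherePackingDensity_mul_pow
    (hP : (P : Set (EuclideanSpace ℝ (Fin d))).Pairwise fun x y => 2 ≤ dist x y) {ρ : ℝ}
    (hρ : 0 < ρ) (hPρ : volume (thickening 2 (P : Set (EuclideanSpace ℝ (Fin d)))) =
      volume (ball (0 : EuclideanSpace ℝ (Fin d)) ρ)) :
    P.card ≤ spherePackingDensity d * ρ ^ d := by
  have hdensity := card_mul_volume_ball_le_spherePackingDensity_mul hP
  rw [measureReal_def _ (thickening _ _), hPρ, ← measureReal_def,
    measureReal_ball_eq_pow_mul _ 0 hρ, finrank_euclideanSpace_fin, ← mul_assoc] at hdensity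
  exact le_of_mul_le_mul_right hdensity (measureReal_ball_pos _ _ one_pos)

theorem spherePackingDensity_rpow_mul_card_rpow_le (hd : d ≠ 0)
    (hP : (P : Set (EuclideanSpace ℝ (Fin d))).Pairwise fun x y => 2 ≤ dist x y)
    (hP_ne : P.Nonempty) :
    spherePackingDensity d ^ (-(((d : ℝ) - 1) / d)) * (P.card : ℝ) ^ (((d : ℝ) - 1) / d) ≤
      (unsaturated P).card * 2 ^ (d - 1) := by
  have : NeZero d := ⟨hd⟩
  obtain ⟨p, hp⟩ := hP_ne
  have hU₀ : volume (thickening 2 (P : Set (EuclideanSpace ℝ (Fin d)))) ≠ 0 :=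
    (isOpen_thickening.measure_pos _ ⟨p, self_subset_thickening two_pos _ hp⟩).ne'
  obtain ⟨ρ, hρ, hPρ⟩ := exists_measure_ball_eq
    (volume : Measure (EuclideanSpace ℝ (Fin d))) hU₀
    P.finite_toSet.isBounded.thickening.measure_lt_top.ne
  have hcard := card_le_spherePackingDensity_mul_pow hP hρ hPρ.symm
  have hn : 0 < (P.card : ℝ) := Nat.cast_pos.2 (Finset.card_pos.2 ⟨p, hp⟩)
  have hδ : 0 < spherePackingDensity d :=
    pos_of_mul_pos_left (hn.trans_le hcard) (pow_pos hρ d).le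
  have hd_one : 1 ≤ d := Nat.one_le_iff_ne_zero.2 hd
  calc spherePackingDensity d ^ (-(((d : ℝ) - 1) / d)) * (P.card : ℝ) ^ (((d : ℝ) - 1) / d)
      = (P.card / spherePackingDensity d) ^ (((d : ℝ) - 1) / d) := by
        rw [Real.div_rpow hn.le hδ.le, Real.rpow_neg hδ.le, div_eq_inv_mul (_ ^ _)]
    _ ≤ (ρ ^ d) ^ (((d : ℝ) - 1) / d) := by
        have hexp : 0 ≤ ((d : ℝ) - 1) / d :=
          div_nonneg (sub_nonneg.2 (Nat.one_le_cast.2 hd_one)) d.cast_nonneg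
        exact Real.rpow_le_rpow (by positivity) ((div_le_iff₀' hδ).2 hcard) hexp
    _ = ρ ^ (d - 1) := by
        rw [← Real.rpow_natCast, ← Real.rpow_natCast, ← Real.rpow_mul hρ.le,
          mul_div_cancel₀ _ (Nat.cast_ne_zero.2 hd), Nat.cast_pred hd_one]
    _ ≤ (unsaturated P).card * 2 ^ (d - 1) := pow_le_card_unsaturated_mul_two_pow hd hP hρ hPρ.symm

end Growth

theorem contact_upper_bound_dim_general {d : ℕ} (hd : 2 ≤ d)
    {P : Finset (EuclideanSpace ℝ (Fin d))}
    (hP : (P : Set (EuclideanSpace ℝ (Fin d))).Pairwise fun x y => 2 ≤ dist x y)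
    (hP_ne : P.Nonempty) :
    (contactsOrdered P : ℝ) <
      2 * ((1 / 2) * (kissingNumber d) * P.card -
        (1 / 2 ^ d) * (spherePackingDensity d) ^ (-(((d : ℝ) - 1) / d)) *
          (P.card : ℝ) ^ (((d : ℝ) - 1) / d)) := by
  have hcontacts : (contactsOrdered P + (unsaturated P).card : ℝ) < kissingNumber d * P.card := by
    exact_mod_cast contactsOrdered_add_card_unsaturated_lt hd hP hP_ne
  have hunsat := spherePackingDensity_rpow_mul_card_rpow_le (by omega) hP hP_ne
  have hpow : (2 : ℝ) ^ d = 2 * 2 ^ (d - 1) := (mul_pow_sub_one (by omega) 2).symm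
  rw [← div_le_iff₀ (by positivity)] at hunsat
  calc (contactsOrdered P : ℝ) < kissingNumber d * P.card - (unsaturated P).card := by linarith
    _ ≤ kissingNumber d * P.card - spherePackingDensity d ^ (-(((d : ℝ) - 1) / d)) *
          (P.card : ℝ) ^ (((d : ℝ) - 1) / d) / 2 ^ (d - 1) := by gcongr
    _ = _ := by
        rw [hpow]
        field_simp

/-- For `n > 1`, `d ≥ 3`, every packing of `n` unit balls in `ℝ^d` has fewer than
`(1/2)k(d)n - (1/2^d)·δ_d^(-(d-1)/d)·n^((d-1)/d)` touching pairs. -/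
theorem contact_upper_bound_dim (n d : ℕ) (hn : 1 < n) (hd : 3 ≤ d)
    (P : Finset (EuclideanSpace ℝ (Fin d))) (hcard : P.card = n)
    (hpack : ∀ x ∈ P, ∀ y ∈ P, x ≠ y → 2 ≤ dist x y) :
    (contactsOrdered P : ℝ) <
      2 * ((1 / 2) * (kissingNumber d) * n -
        (1 / 2 ^ d) * (spherePackingDensity d) ^ (-(((d : ℝ) - 1) / d)) *
          (n : ℝ) ^ (((d : ℝ) - 1) / d)) := by
  subst hcard
  exact contact_upper_bound_dim_general (by omega) (fun x hx y hy hxy => hpack x hx y hy hxy)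
    (Finset.card_pos.1 (by omega))
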